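/- arXiv:2605.25897 — 2 statements merged into one kernel-verified Lean document; each statement's English description precedes it below -/
import Mathlib

section
/- Let F be a CDF on ℝ whose quantile function Q = F^{-1} is locally absolutely continuous on (0,1) with a.e. derivative q ≥ 0 satisfying C := ∫₀¹ √(u(1−u)) q(u) du < ∞. Then for every positive integer m, ‖F_m − F‖₁ = ∫_ℝ |H_m(F)(x) − F(x)| dx ≤ C · m^{−1/2}; in particular ‖F_m − F‖₁ = O(m^{−1/2}) as m → ∞. -/
open MeasureTheory Filter Set
open scoped BoundedContinuousFunction ProbabilityTheory

noncomputable section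

/-- Density of the Beta(j, m-j+1) distribution. -/
def betaDens (m j : ℕ) (u : ℝ) : ℝ :=
  (m : ℝ) * ((m - 1).choose (j - 1) : ℝ) * u ^ (j - 1) * (1 - u) ^ (m - j)

/-- Quantile function (left-continuous generalized inverse). -/
def quantile (G : ℝ → ℝ) (p : ℝ) : ℝ :=
  sInf {x : ℝ | p ≤ G x}

/-- `G` is a cumulative distribution function on ℝ. -/
structure IsCDF (G : ℝ → ℝ) : Prop where
  mono : Monotone G
  rightCont : ∀ x, ContinuousWithinAt G (Ici x) x
  tendsto_atBot : Tendsto G atBot (nhds 0)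
  tendsto_atTop : Tendsto G atTop (nhds 1)

/-- `G` has finite mean: its quantile function is integrable on (0,1). -/
def HasFiniteMean (G : ℝ → ℝ) : Prop :=
  IntegrableOn (fun u => quantile G u) (Ioo (0:ℝ) 1)

/-- Expected j-th order statistic from a sample of size m drawn from G. -/
def muOS (m j : ℕ) (G : ℝ → ℝ) : ℝ :=
  ∫ u in Ioo (0:ℝ) 1, quantile G u * betaDens m j u

/-- The Hoeffding CDF operator `H_m`. -/
def hoeffCDF (m : ℕ) (G : ℝ → ℝ) (x : ℝ) : ℝ :=
  (m : ℝ)⁻¹ * ∑ j ∈ Finset.Icc 1 m, if muOS m j G ≤ x then (1:ℝ) else 0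

/-- The quantile-Hoeffding operator `I_m`. -/
def quantHoeff (m : ℕ) (h : ℝ → ℝ) (u : ℝ) : ℝ :=
  ∑ j ∈ Finset.Icc 1 m,
    (∫ t in Ioo (0:ℝ) 1, h t * betaDens m j t) *
      (if u ∈ Ioc (((j : ℝ) - 1) / m) ((j : ℝ) / m) then (1:ℝ) else 0)

/-- Empirical CDF of the reals `x 0, ..., x (n-1)`. -/
def ecdf (n : ℕ) (x : ℕ → ℝ) (t : ℝ) : ℝ :=
  (n : ℝ)⁻¹ * ∑ i ∈ Finset.range n, if x i ≤ t then (1:ℝ) else 0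

/-- Empirical CDF of the random sample `X 0, ..., X (n-1)`. -/
def empCDF {Ω : Type*} (X : ℕ → Ω → ℝ) (n : ℕ) (ω : Ω) : ℝ → ℝ :=
  fun t => (n : ℝ)⁻¹ * ∑ i ∈ Finset.range n, if X i ω ≤ t then (1:ℝ) else 0

/-!
Let `Q` be the quantile function of `F`. On the cell `((j - 1) / m, j / m]` of `(0, 1]`, compare `Q`
with an independent copy of the order statistic `X_{j:m}`: its mean is `μ_{j:m}`, so by Jensen's
inequality `‖F_m - F‖₁` is at most the sum over `j` of the integrals of `E|Q(u) - X_{j:m}|` over the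
cells. Since `E|X - Y| = ∫ (P(X ≤ x) P(Y > x) + P(X > x) P(Y ≤ x)) dx` for independent `X` and `Y`,
and since the distribution function of `X_{j:m}` at `x` is a binomial tail in `s = F x`, summation
by parts over `j` leaves the mean absolute deviation `E|B / m - s|` of a binomial variable `B` with
parameters `m` and `s`, which is at most the standard deviation `√(s (1 - s) / m)` of `B / m`. Hence
`‖F_m - F‖₁ ≤ m ^ (-1/2) ∫ √(F (1 - F)) dx`, and the substitution `u = F x` turns the integral
into `C`.
-/

section Sums

theorem sum_range_mul_sum_add_sum {R : Type*} [CommSemiring R] (A B w : ℕ → R) (m : ℕ) :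
    ∑ j ∈ Finset.range m, (A j * ∑ k ∈ Finset.range (j + 1), w k +
        B j * ∑ k ∈ Finset.Ico (j + 1) (m + 1), w k) =
      ∑ k ∈ Finset.range (m + 1),
        w k * (∑ j ∈ Finset.Ico k m, A j + ∑ j ∈ Finset.range k, B j) := by
  simp only [Finset.sum_add_distrib, mul_add, Finset.mul_sum]
  congr 1 <;>
  · simp only [mul_comm (w _)]
    refine Finset.sum_comm' fun j k ↦ ?_
    simp only [Finset.mem_range, Finset.mem_Ico]
    omega

theorem sum_min_sub_add_sum_max_sub_eq_abs {x : ℕ → ℝ} {s : ℝ} {k m : ℕ} (hkm : k ≤ m)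
    (h0 : x 0 ≤ s) (hm : s ≤ x m) :
    ∑ j ∈ Finset.Ico k m, (min (x (j + 1)) s - min (x j) s) +
      ∑ j ∈ Finset.range k, (max (x (j + 1)) s - max (x j) s) = |s - x k| := by
  rw [Finset.sum_Ico_sub (fun j ↦ min (x j) s) hkm,
    Finset.sum_range_sub (fun j ↦ max (x j) s), min_eq_right hm, max_eq_right h0,
    ← max_sub_min_eq_abs (x k) s]
  ring

end Sums

section Bernstein

open Polynomial
open scoped unitInterval

/-- The probability that a binomial variable with parameters `m` and `X` exceeds `j`, as a
polynomial in `X`; at `s ∈ [0, 1]` this is the distribution function of the order statistic of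
rank `j + 1` among `m` independent uniform variables. -/
def bernsteinTail (R : Type*) [CommRing R] (m j : ℕ) : R[X] :=
  ∑ k ∈ Finset.Ico (j + 1) (m + 1), bernsteinPolynomial R m k

theorem sum_bernsteinPolynomial_add_bernsteinTail (R : Type*) [CommRing R] {m j : ℕ}
    (hj : j ≤ m) :
    ∑ k ∈ Finset.range (j + 1), bernsteinPolynomial R m k + bernsteinTail R m j = 1 := by
  rw [bernsteinTail, Finset.sum_range_add_sum_Ico _ (by omega), bernsteinPolynomial.sum]

theorem derivative_bernsteinTail (R : Type*) [CommRing R] {m j : ℕ} (hj : j ≤ m) :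
    derivative (bernsteinTail R (m + 1) j) = (m + 1) * bernsteinPolynomial R m j := by
  have h (k : ℕ) : derivative (bernsteinPolynomial R (m + 1) (k + 1)) =
      -(((m : R[X]) + 1) *
        (bernsteinPolynomial R m (k + 1) - bernsteinPolynomial R m k)) := by
    rw [bernsteinPolynomial.derivative_succ]
    push_cast
    ring
  rw [bernsteinTail, derivative_sum, ← Finset.sum_Ico_add' _ j (m + 1) 1]
  simp only [h]
  rw [Finset.sum_neg_distrib, ← Finset.mul_sum,
    Finset.sum_Ico_sub _ (by omega : j ≤ m + 1), bernsteinPolynomial.eq_zero_of_lt R m.lt_succ_self]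
  ring

theorem eval_bernsteinTail_zero (m j : ℕ) : (bernsteinTail ℝ m j).eval 0 = 0 := by
  simp [bernsteinTail, eval_finsetSum, bernsteinPolynomial.eval_at_0]

theorem eval_bernsteinTail_one {m j : ℕ} (hj : j < m) : (bernsteinTail ℝ m j).eval 1 = 1 := by
  simp [bernsteinTail, eval_finsetSum, bernsteinPolynomial.eval_at_1, Nat.succ_le_of_lt hj]

theorem hasDerivAt_eval_bernsteinTail {m j : ℕ} (hj : j < m) (s : ℝ) :
    HasDerivAt (fun s ↦ (bernsteinTail ℝ m j).eval s) (betaDens m (j + 1) s) s := by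
  obtain ⟨m, rfl⟩ := Nat.exists_eq_succ_of_ne_zero (Nat.ne_zero_of_lt hj)
  refine ((bernsteinTail ℝ (m + 1) j).hasDerivAt s).congr_deriv ?_
  rw [derivative_bernsteinTail ℝ (Nat.lt_succ_iff.1 hj)]
  simp [betaDens, bernsteinPolynomial, mul_assoc]

theorem eval_bernsteinTail_nonneg (m j : ℕ) {s : ℝ} (hs : s ∈ I) :
    0 ≤ (bernsteinTail ℝ m j).eval s := by
  rw [bernsteinTail, eval_finsetSum]
  exact Finset.sum_nonneg fun k _ ↦ bernstein_nonneg (x := ⟨s, hs⟩)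

theorem eval_bernsteinTail_le_one {m j : ℕ} (hj : j ≤ m) {s : ℝ} (hs : s ∈ I) :
    (bernsteinTail ℝ m j).eval s ≤ 1 := by
  have hsum := congr(eval s $(sum_bernsteinPolynomial_add_bernsteinTail ℝ hj))
  have hnonneg : 0 ≤ eval s (∑ k ∈ Finset.range (j + 1), bernsteinPolynomial ℝ m k) := by
    rw [eval_finsetSum]
    exact Finset.sum_nonneg fun k _ ↦ bernstein_nonneg (x := ⟨s, hs⟩)
  simp only [eval_add, eval_one] at hsum
  linarith

theorem sum_bernstein_mul_abs_sub_le {m : ℕ} (hm : m ≠ 0) (s : I) :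
    ∑ k : Fin (m + 1), bernstein m k s * |(s : ℝ) - bernstein.z k| ≤
      √(s * (1 - s) / m) := by
  refine Real.le_sqrt_of_sq_le ?_
  calc (∑ k : Fin (m + 1), bernstein m k s * |(s : ℝ) - bernstein.z k|) ^ 2
    _ ≤ ∑ k : Fin (m + 1), bernstein m k s * |(s : ℝ) - bernstein.z k| ^ 2 :=
        Real.pow_arith_mean_le_arith_mean_pow_of_even _ _ _ (fun _ _ ↦ bernstein_nonneg)
          (bernstein.probability m s) even_two
    _ = s * (1 - s) / m := by
        simp_rw [sq_abs, mul_comm (bernstein m _ s)]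
        exact bernstein.variance hm s

theorem sum_min_sub_mul_add_max_sub_mul_bernsteinTail_le {m : ℕ} (hm : m ≠ 0) {s : ℝ}
    (hs : s ∈ I) :
    ∑ j ∈ Finset.range m,
      ((min (((j : ℝ) + 1) / m) s - min ((j : ℝ) / m) s) * (1 - (bernsteinTail ℝ m j).eval s) +
        (max (((j : ℝ) + 1) / m) s - max ((j : ℝ) / m) s) * (bernsteinTail ℝ m j).eval s) ≤
      √(s * (1 - s) / m) := by
  have hhead : ∀ j ∈ Finset.range m, 1 - (bernsteinTail ℝ m j).eval s =
      ∑ k ∈ Finset.range (j + 1), (bernsteinPolynomial ℝ m k).eval s := fun j hj ↦ by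
    rw [← eval_finsetSum, ← eval_one, ← eval_sub,
      ← sum_bernsteinPolynomial_add_bernsteinTail ℝ (Finset.mem_range.1 hj).le,
      add_sub_cancel_right]
  refine le_of_eq_of_le ?_ (sum_bernstein_mul_abs_sub_le hm ⟨s, hs⟩)
  calc _ = ∑ k ∈ Finset.range (m + 1), (bernsteinPolynomial ℝ m k).eval s *
          (∑ j ∈ Finset.Ico k m, (min (((j : ℝ) + 1) / m) s - min ((j : ℝ) / m) s) +
            ∑ j ∈ Finset.range k, (max (((j : ℝ) + 1) / m) s - max ((j : ℝ) / m) s)) := by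
        rw [← sum_range_mul_sum_add_sum]
        refine Finset.sum_congr rfl fun j hj ↦ ?_
        rw [hhead j hj, bernsteinTail, eval_finsetSum]
    _ = ∑ k ∈ Finset.range (m + 1), (bernsteinPolynomial ℝ m k).eval s * |s - k / m| := by
        refine Finset.sum_congr rfl fun k hk ↦ ?_
        have htel := sum_min_sub_add_sum_max_sub_eq_abs (x := fun j ↦ (j : ℝ) / m)
          (Finset.mem_range_succ_iff.1 hk) (by simpa using hs.1) (by simpa [hm] using hs.2)
        push_cast at htel
        rw [htel]
    _ = _ := Finset.sum_range _

end Bernstein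

section MeasuresOnTheLine

open scoped ENNReal

theorem edist_eq_volume_Ico_add_volume_Ico (a b : ℝ) :
    edist a b = volume (Ico a b) + volume (Ico b a) := by
  rw [Real.volume_Ico, Real.volume_Ico, edist_dist, Real.dist_eq]
  rcases le_total a b with h | h
  · rw [abs_sub_comm, abs_of_nonneg (sub_nonneg.2 h), ENNReal.ofReal_of_nonpos (sub_nonpos.2 h),
      add_zero]
  · rw [abs_of_nonneg (sub_nonneg.2 h), ENNReal.ofReal_of_nonpos (sub_nonpos.2 h), zero_add]

theorem lintegral_lintegral_edist (μ ν : Measure ℝ) [SFinite μ] [SFinite ν] :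
    ∫⁻ a, ∫⁻ b, edist a b ∂ν ∂μ = ∫⁻ x, (μ (Iic x) * ν (Ioi x) + μ (Ioi x) * ν (Iic x)) := by
  let E : Set ((ℝ × ℝ) × ℝ) :=
    {p | p.1.1 ≤ p.2 ∧ p.2 < p.1.2} ∪ {p | p.1.2 ≤ p.2 ∧ p.2 < p.1.1}
  have hE : MeasurableSet E := by measurability
  calc ∫⁻ a, ∫⁻ b, edist a b ∂ν ∂μ
    _ = ∫⁻ p : ℝ × ℝ, edist p.1 p.2 ∂μ.prod ν :=
        (lintegral_prod _ measurable_edist.aemeasurable).symm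
    _ = ∫⁻ p : ℝ × ℝ, volume (Prod.mk p ⁻¹' E) ∂μ.prod ν := by
        refine lintegral_congr fun p ↦ ?_
        have hdisj : Disjoint (Ico p.1 p.2) (Ico p.2 p.1) :=
          disjoint_left.2 fun x h h' ↦ (h.2.trans_le h'.1).false
        rw [edist_eq_volume_Ico_add_volume_Ico, ← measure_union hdisj measurableSet_Ico]
        rfl
    _ = ∫⁻ x, μ.prod ν ((fun p ↦ (p, x)) ⁻¹' E) := by
        rw [← Measure.prod_apply hE, Measure.prod_apply_symm hE]
    _ = ∫⁻ x, (μ (Iic x) * ν (Ioi x) + μ (Ioi x) * ν (Iic x)) := by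
        refine lintegral_congr fun x ↦ ?_
        have hslice : (fun p ↦ (p, x)) ⁻¹' E = Iic x ×ˢ Ioi x ∪ Ioi x ×ˢ Iic x := by
          ext p
          simp [E, and_comm]
        have hdisj : Disjoint (Iic x ×ˢ Ioi x) (Ioi x ×ˢ Iic x) :=
          (Iic_disjoint_Ioi le_rfl).set_prod_left _ _
        rw [hslice, measure_union hdisj (measurableSet_Ioi.prod measurableSet_Iic),
          Measure.prod_prod, Measure.prod_prod]

theorem edist_integral_le_lintegral_edist {α E : Type*} [MeasurableSpace α]
    [NormedAddCommGroup E] [NormedSpace ℝ E] [CompleteSpace E] (μ : Measure α)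
    [IsProbabilityMeasure μ] {f : α → E} (hf : AEStronglyMeasurable f μ) (a : E) :
    edist a (∫ x, f x ∂μ) ≤ ∫⁻ x, edist a (f x) ∂μ := by
  simp only [edist_eq_enorm_sub]
  by_cases hint : Integrable f μ
  · calc ‖a - ∫ x, f x ∂μ‖ₑ
      _ = ‖∫ x, (a - f x) ∂μ‖ₑ := by
          rw [integral_sub (integrable_const a) hint, integral_const, probReal_univ, one_smul]
      _ ≤ ∫⁻ x, ‖a - f x‖ₑ ∂μ := enorm_integral_le_lintegral_enorm _
  · have hdiff : ¬ Integrable (fun x ↦ a - f x) μ := fun h ↦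
      hint (by simpa [Pi.sub_def] using (integrable_const a).sub h)
    have htop : ∫⁻ x, ‖a - f x‖ₑ ∂μ = ∞ := by
      by_contra h
      exact hdiff ⟨aestronglyMeasurable_const.sub hf, lt_top_iff_ne_top.2 h⟩
    exact htop ▸ le_top

theorem enorm_measureReal_univ_mul_step_sub (μ : Measure ℝ) [IsFiniteMeasure μ] (c x : ℝ) :
    ‖μ.real univ * (if c ≤ x then 1 else 0) - μ.real (Iic x)‖ₑ =
      μ (Iic x) * Measure.dirac c (Ioi x) + μ (Ioi x) * Measure.dirac c (Iic x) := by
  rcases le_or_gt c x with h | h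
  · have hsub : μ.real univ - μ.real (Iic x) = μ.real (Ioi x) := by
      rw [← compl_Iic, measureReal_compl measurableSet_Iic]
    simp [h, hsub, Real.enorm_of_nonneg, ofReal_measureReal]
  · simp [h, h.not_ge, Real.enorm_of_nonneg, ofReal_measureReal]

theorem measurable_measure_Iic {α : Type*} [TopologicalSpace α] [LinearOrder α]
    [OrderClosedTopology α] [MeasurableSpace α] [BorelSpace α] (μ : Measure α) :
    Measurable fun x ↦ μ (Iic x) :=
  Monotone.measurable fun _ _ h ↦ measure_mono (Iic_subset_Iic.2 h)

theorem measurable_measure_Ioi {α : Type*} [TopologicalSpace α] [LinearOrder α]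
    [OrderClosedTopology α] [MeasurableSpace α] [BorelSpace α] (μ : Measure α) :
    Measurable fun x ↦ μ (Ioi x) :=
  Antitone.measurable fun _ _ h ↦ measure_mono (Ioi_subset_Ioi h)

theorem lintegral_enorm_sum_step_integral_sub_le {ι : Type*} (s : Finset ι)
    (μ ν : ι → Measure ℝ) [∀ i, IsFiniteMeasure (μ i)] (hν : ∀ i ∈ s, IsProbabilityMeasure (ν i)) :
    ∫⁻ x, ‖∑ i ∈ s, ((μ i).real univ * (if ∫ b, b ∂ν i ≤ x then 1 else 0) -
        (μ i).real (Iic x))‖ₑ ≤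
      ∫⁻ x, ∑ i ∈ s, (μ i (Iic x) * ν i (Ioi x) + μ i (Ioi x) * ν i (Iic x)) := by
  have hmeas (μ ν : Measure ℝ) :
      Measurable fun x ↦ μ (Iic x) * ν (Ioi x) + μ (Ioi x) * ν (Iic x) :=
    ((measurable_measure_Iic μ).mul (measurable_measure_Ioi ν)).add
      ((measurable_measure_Ioi μ).mul (measurable_measure_Iic ν))
  calc _ ≤ ∫⁻ x, ∑ i ∈ s, (μ i (Iic x) * Measure.dirac (∫ b, b ∂ν i) (Ioi x) +
          μ i (Ioi x) * Measure.dirac (∫ b, b ∂ν i) (Iic x)) := by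
        refine lintegral_mono fun x ↦ (enorm_sum_le _ _).trans_eq ?_
        simp_rw [enorm_measureReal_univ_mul_step_sub]
    _ = ∑ i ∈ s, ∫⁻ a, edist a (∫ b, b ∂ν i) ∂μ i := by
        rw [lintegral_finsetSum _ fun i _ ↦ hmeas _ _]
        refine Finset.sum_congr rfl fun i _ ↦ ?_
        rw [← lintegral_lintegral_edist]
        simp only [lintegral_dirac]
    _ ≤ ∑ i ∈ s, ∫⁻ a, ∫⁻ b, edist a b ∂ν i ∂μ i := by
        refine Finset.sum_le_sum fun i hi ↦ lintegral_mono fun a ↦ ?_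
        have := hν i hi
        exact edist_integral_le_lintegral_edist (ν i) aestronglyMeasurable_id a
    _ = _ := by
        rw [lintegral_finsetSum _ fun i _ ↦ hmeas _ _]
        refine Finset.sum_congr rfl fun i hi ↦ ?_
        have := hν i hi
        exact lintegral_lintegral_edist (μ i) (ν i)

theorem volume_restrict_Ioc_Iic {a b : ℝ} (hab : a ≤ b) (s : ℝ) :
    volume.restrict (Ioc a b) (Iic s) = ENNReal.ofReal (min b s - min a s) := by
  rw [Measure.restrict_apply measurableSet_Iic, inter_comm, Ioc_inter_Iic, Real.volume_Ioc]
  rcases le_total a s with h | h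
  · rw [min_eq_left h]
  · rw [min_eq_right h, min_eq_right (h.trans hab), sub_self, ENNReal.ofReal_zero,
      ENNReal.ofReal_of_nonpos (sub_nonpos.2 h)]

theorem volume_restrict_Ioc_Ioi {a b : ℝ} (hab : a ≤ b) (s : ℝ) :
    volume.restrict (Ioc a b) (Ioi s) = ENNReal.ofReal (max b s - max a s) := by
  rw [Measure.restrict_apply measurableSet_Ioi, inter_comm, Ioc_inter_Ioi, Real.volume_Ioc]
  rcases le_total s b with h | h
  · rw [max_eq_left h]
  · rw [max_eq_right h, max_eq_right (hab.trans h), sub_self, ENNReal.ofReal_zero,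
      ENNReal.ofReal_of_nonpos (sub_nonpos.2 h)]

theorem restrict_Ioo_ext_of_Ico {α : Type*} [TopologicalSpace α] [SecondCountableTopology α]
    [LinearOrder α] [OrderTopology α] [DenselyOrdered α] [MeasurableSpace α] [BorelSpace α]
    {a b : α} {μ ν : Measure α}
    (hfin : ∀ c ∈ Ioo a b, ∀ d ∈ Ioo a b, c < d → μ (Ico c d) ≠ ∞)
    (h : ∀ c ∈ Ioo a b, ∀ d ∈ Ioo a b, c < d → μ (Ico c d) = ν (Ico c d)) :
    μ.restrict (Ioo a b) = ν.restrict (Ioo a b) := by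
  have himage (c d : Ioo a b) : Subtype.val '' Ico c d = Ico c.1 d.1 := by
    ext x
    simp only [mem_image, mem_Ico, Subtype.exists, exists_and_right, exists_eq_right]
    exact ⟨fun ⟨_, h⟩ ↦ h, fun h ↦ ⟨⟨c.2.1.trans_le h.1, h.2.trans d.2.2⟩, h⟩⟩
  have hcomap (ρ : Measure α) (c d : Ioo a b) :
      ρ.comap Subtype.val (Ico c d) = ρ (Ico c.1 d.1) := by
    rw [comap_subtype_coe_apply measurableSet_Ioo, himage]
  rw [← map_comap_subtype_coe measurableSet_Ioo, ← map_comap_subtype_coe measurableSet_Ioo]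
  congr 1
  refine Measure.ext_of_Ico' _ _ (fun c d hcd ↦ ?_) fun c d hcd ↦ ?_
  · rw [hcomap]
    exact hfin c c.2 d d.2 hcd
  · rw [hcomap, hcomap]
    exact h c c.2 d d.2 hcd

end MeasuresOnTheLine

section Quantile

open scoped unitInterval

namespace IsCDF

variable {F : ℝ → ℝ}

theorem mem_unitInterval (hF : IsCDF F) (x : ℝ) : F x ∈ I :=
  ⟨hF.mono.le_of_tendsto hF.tendsto_atBot x, hF.mono.ge_of_tendsto hF.tendsto_atTop x⟩

theorem quantile_le_iff (hF : IsCDF F) {u : ℝ} (hu : u ∈ Ioo (0 : ℝ) 1) (x : ℝ) :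
    quantile F u ≤ x ↔ u ≤ F x := by
  have hbdd : BddBelow {x | u ≤ F x} := by
    obtain ⟨y, hy⟩ := (hF.tendsto_atBot.eventually_lt_const hu.1).exists
    exact ⟨y, fun z hz ↦ (hF.mono.reflect_lt (hy.trans_le hz)).le⟩
  have hne : {x | u ≤ F x}.Nonempty := by
    obtain ⟨y, hy⟩ := (hF.tendsto_atTop.eventually_const_lt hu.2).exists
    exact ⟨y, hy.le⟩
  refine ⟨fun h ↦ ?_, fun h ↦ csInf_le hbdd h⟩
  have hright : Tendsto F (nhdsWithin x (Ioi x)) (nhds (F x)) :=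
    (hF.rightCont x).mono Ioi_subset_Ici_self
  refine ge_of_tendsto hright (eventually_mem_nhdsWithin.mono fun y hxy ↦ ?_)
  obtain ⟨z, hz, hzy⟩ := exists_lt_of_csInf_lt hne (h.trans_lt hxy)
  exact hz.trans (hF.mono hzy.le)

theorem monotoneOn_quantile (hF : IsCDF F) : MonotoneOn (quantile F) (Ioo 0 1) :=
  fun _ hu _ hv huv ↦
    (hF.quantile_le_iff hu _).2 (huv.trans ((hF.quantile_le_iff hv _).1 le_rfl))

theorem volume_preimage_Ico (hF : IsCDF F) {a b : ℝ} (ha : a ∈ Ioo (0 : ℝ) 1)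
    (hb : b ∈ Ioo (0 : ℝ) 1) :
    volume (F ⁻¹' Ico a b) = ENNReal.ofReal (quantile F b - quantile F a) := by
  have hpre : F ⁻¹' Ico a b = Ico (quantile F a) (quantile F b) := by
    ext x
    rw [mem_preimage, mem_Ico, mem_Ico, hF.quantile_le_iff ha, ← not_le, ← not_le,
      hF.quantile_le_iff hb]
  rw [hpre, Real.volume_Ico]

variable {ρ : Measure ℝ}

theorem aemeasurable_quantile (hF : IsCDF F) (hρ : ∀ᵐ u ∂ρ, u ∈ Ioo (0 : ℝ) 1) :
    AEMeasurable (quantile F) ρ := by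
  rw [← Measure.restrict_eq_self_of_ae_mem hρ]
  exact aemeasurable_restrict_of_monotoneOn measurableSet_Ioo hF.monotoneOn_quantile

theorem preimage_quantile_Iic_ae_eq (hF : IsCDF F) (hρ : ∀ᵐ u ∂ρ, u ∈ Ioo (0 : ℝ) 1) (x : ℝ) :
    quantile F ⁻¹' Iic x =ᵐ[ρ] Iic (F x) :=
  eventuallyEq_set.2 (hρ.mono fun _ hu ↦ hF.quantile_le_iff hu x)

theorem map_quantile_Iic (hF : IsCDF F) (hρ : ∀ᵐ u ∂ρ, u ∈ Ioo (0 : ℝ) 1) (x : ℝ) :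
    ρ.map (quantile F) (Iic x) = ρ (Iic (F x)) := by
  rw [Measure.map_apply_of_aemeasurable (hF.aemeasurable_quantile hρ) measurableSet_Iic]
  exact measure_congr (hF.preimage_quantile_Iic_ae_eq hρ x)

theorem map_quantile_Ioi (hF : IsCDF F) (hρ : ∀ᵐ u ∂ρ, u ∈ Ioo (0 : ℝ) 1) (x : ℝ) :
    ρ.map (quantile F) (Ioi x) = ρ (Ioi (F x)) := by
  rw [Measure.map_apply_of_aemeasurable (hF.aemeasurable_quantile hρ) measurableSet_Ioi,
    ← compl_Iic, ← compl_Iic, preimage_compl]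
  exact measure_congr (hF.preimage_quantile_Iic_ae_eq hρ x).compl

end IsCDF

theorem sqrt_mul_one_sub_eq_zero {u : ℝ} (hu : u ∉ Ioo (0 : ℝ) 1) : √(u * (1 - u)) = 0 :=
  Real.sqrt_eq_zero_of_nonpos <| not_lt.1 fun h ↦ hu (by constructor <;> nlinarith)

/-- `q` is a quantile density of `F`: the quantile function of `F` is locally absolutely continuous
on `(0, 1)` with almost everywhere derivative `q`. Absolute continuity is encoded by the
fundamental theorem of calculus on compact subintervals. -/
structure IsQuantileDensity (F q : ℝ → ℝ) : Prop where
  nonneg : ∀ u ∈ Ioo (0 : ℝ) 1, 0 ≤ q u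
  integrableOn_Icc : ∀ a b : ℝ, 0 < a → a ≤ b → b < 1 → IntegrableOn q (Icc a b)
  quantile_sub : ∀ a b : ℝ, 0 < a → a ≤ b → b < 1 → quantile F b - quantile F a = ∫ u in a..b, q u

namespace IsQuantileDensity

variable {F q : ℝ → ℝ}

theorem locallyIntegrableOn (hq : IsQuantileDensity F q) : LocallyIntegrableOn q (Ioo 0 1) := by
  intro u ⟨hu0, hu1⟩
  obtain ⟨a, ha0, hau⟩ := exists_between hu0
  obtain ⟨b, hub, hb1⟩ := exists_between hu1
  exact ⟨Icc a b, mem_nhdsWithin_of_mem_nhds (Icc_mem_nhds hau hub),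
    hq.integrableOn_Icc a b ha0 (hau.trans hub).le hb1⟩

theorem aemeasurable (hq : IsQuantileDensity F q) : AEMeasurable q (volume.restrict (Ioo 0 1)) :=
  hq.locallyIntegrableOn.aestronglyMeasurable.aemeasurable

theorem setLIntegral_Ico (hq : IsQuantileDensity F q) {a b : ℝ} (ha : 0 < a) (hab : a ≤ b)
    (hb : b < 1) :
    ∫⁻ u in Ico a b, ENNReal.ofReal (q u) = ENNReal.ofReal (quantile F b - quantile F a) := by
  have hnonneg : 0 ≤ᵐ[volume.restrict (Icc a b)] q :=
    ae_restrict_of_forall_mem measurableSet_Icc fun u hu ↦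
      hq.nonneg u ⟨ha.trans_le hu.1, hu.2.trans_lt hb⟩
  rw [Measure.restrict_congr_set Ico_ae_eq_Icc, ← ofReal_integral_eq_lintegral_ofReal
    (hq.integrableOn_Icc a b ha hab hb) hnonneg, hq.quantile_sub a b ha hab hb,
    intervalIntegral.integral_of_le hab, integral_Icc_eq_integral_Ioc]

theorem restrict_map_eq_withDensity (hq : IsQuantileDensity F q) (hF : IsCDF F) :
    (volume.map F).restrict (Ioo 0 1) =
      (volume.restrict (Ioo 0 1)).withDensity fun u ↦ ENNReal.ofReal (q u) := by
  have hmap {a b : ℝ} (ha : a ∈ Ioo (0 : ℝ) 1) (hb : b ∈ Ioo (0 : ℝ) 1) :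
      volume.map F (Ico a b) = ENNReal.ofReal (quantile F b - quantile F a) := by
    rw [Measure.map_apply hF.mono.measurable measurableSet_Ico, hF.volume_preimage_Ico ha hb]
  rw [← restrict_withDensity measurableSet_Ioo]
  refine restrict_Ioo_ext_of_Ico (fun a ha b hb _ ↦ ?_) fun a ha b hb hab ↦ ?_
  · rw [hmap ha hb]
    exact ENNReal.ofReal_ne_top
  · rw [hmap ha hb, withDensity_apply _ measurableSet_Ico, hq.setLIntegral_Ico ha.1 hab.le hb.2]

variable {E : Type*} [NormedAddCommGroup E] [NormedSpace ℝ E] {φ : ℝ → E}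

theorem integrable_comp_iff (hq : IsQuantileDensity F q) (hF : IsCDF F)
    (hφ : StronglyMeasurable φ) (hφ0 : ∀ u ∉ Ioo (0 : ℝ) 1, φ u = 0) :
    Integrable (fun x ↦ φ (F x)) ↔ IntegrableOn (fun u ↦ q u • φ u) (Ioo 0 1) := by
  have hsupp : Function.support φ ⊆ Ioo 0 1 := Function.support_subset_iff'.2 hφ0
  calc Integrable (φ ∘ F) volume
    _ ↔ Integrable φ (volume.map F) :=
        (integrable_map_measure hφ.aestronglyMeasurable hF.mono.measurable.aemeasurable).symm
    _ ↔ Integrable φ ((volume.restrict (Ioo 0 1)).withDensity fun u ↦ ENNReal.ofReal (q u)) := by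
        rw [← integrableOn_iff_integrable_of_support_subset hsupp, IntegrableOn,
          hq.restrict_map_eq_withDensity hF]
    _ ↔ IntegrableOn (fun u ↦ q u • φ u) (Ioo 0 1) volume := by
        rw [integrable_withDensity_iff_integrable_smul₀' hq.aemeasurable.ennreal_ofReal (by simp)]
        refine integrableOn_congr_fun (fun u hu ↦ ?_) measurableSet_Ioo
        rw [ENNReal.toReal_ofReal (hq.nonneg u hu)]

theorem integral_comp (hq : IsQuantileDensity F q) (hF : IsCDF F)
    (hφ : StronglyMeasurable φ) (hφ0 : ∀ u ∉ Ioo (0 : ℝ) 1, φ u = 0) :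
    ∫ x, φ (F x) = ∫ u in Ioo 0 1, q u • φ u := by
  calc ∫ x, φ (F x)
    _ = ∫ u, φ u ∂volume.map F :=
        (integral_map hF.mono.measurable.aemeasurable hφ.aestronglyMeasurable).symm
    _ = ∫ u, φ u ∂(volume.restrict (Ioo 0 1)).withDensity fun u ↦ ENNReal.ofReal (q u) := by
        rw [← setIntegral_eq_integral_of_forall_compl_eq_zero hφ0,
          hq.restrict_map_eq_withDensity hF]
    _ = ∫ u in Ioo 0 1, q u • φ u := by
        rw [integral_withDensity_eq_integral_toReal_smul₀ hq.aemeasurable.ennreal_ofReal (by simp)]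
        refine setIntegral_congr_fun measurableSet_Ioo fun u hu ↦ ?_
        rw [ENNReal.toReal_ofReal (hq.nonneg u hu)]

theorem integrable_sqrt_mul_one_sub_iff (hq : IsQuantileDensity F q) (hF : IsCDF F) :
    (Integrable fun x ↦ √(F x * (1 - F x))) ↔
      IntegrableOn (fun u ↦ √(u * (1 - u)) * q u) (Ioo 0 1) := by
  simp_rw [mul_comm √_ (q _)]
  exact hq.integrable_comp_iff hF (φ := fun u ↦ √(u * (1 - u))) (by fun_prop)
    fun _ ↦ sqrt_mul_one_sub_eq_zero

theorem integral_sqrt_mul_one_sub (hq : IsQuantileDensity F q) (hF : IsCDF F) :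
    ∫ x, √(F x * (1 - F x)) = ∫ u in Ioo 0 1, √(u * (1 - u)) * q u := by
  simp_rw [mul_comm √_ (q _)]
  exact hq.integral_comp hF (φ := fun u ↦ √(u * (1 - u))) (by fun_prop)
    fun _ ↦ sqrt_mul_one_sub_eq_zero

end IsQuantileDensity

end Quantile

section OrderStatistics

open scoped unitInterval

theorem continuous_betaDens (m j : ℕ) : Continuous (betaDens m j) := by
  unfold betaDens
  fun_prop

theorem betaDens_nonneg (m j : ℕ) {u : ℝ} (hu : u ∈ I) : 0 ≤ betaDens m j u := by
  have := hu.1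
  have := sub_nonneg.2 hu.2
  unfold betaDens
  positivity

/-- The law of the order statistic of rank `j` among `m` independent uniform variables on
`(0, 1)`, that is, the Beta(j, m - j + 1) distribution. Its image under the quantile function of
`F` is the law of the corresponding order statistic of a sample from `F`. -/
def uniformOrderStat (m j : ℕ) : Measure ℝ :=
  (volume.restrict (Ioo 0 1)).withDensity fun u ↦ ENNReal.ofReal (betaDens m j u)

theorem ae_mem_Ioo_uniformOrderStat (m j : ℕ) : ∀ᵐ u ∂uniformOrderStat m j, u ∈ Ioo (0 : ℝ) 1 :=
  (withDensity_absolutelyContinuous _ _).ae_le (ae_restrict_mem measurableSet_Ioo)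

theorem uniformOrderStat_Iic {m j : ℕ} (hj : j < m) {s : ℝ} (hs : s ∈ I) :
    uniformOrderStat m (j + 1) (Iic s) = ENNReal.ofReal ((bernsteinTail ℝ m j).eval s) := by
  have hnonneg : 0 ≤ᵐ[volume.restrict (Ioc 0 s)] betaDens m (j + 1) :=
    ae_restrict_of_forall_mem measurableSet_Ioc fun u hu ↦
      betaDens_nonneg m (j + 1) ⟨hu.1.le, hu.2.trans hs.2⟩
  have hint : IntervalIntegrable (betaDens m (j + 1)) volume 0 s :=
    (continuous_betaDens m (j + 1)).intervalIntegrable 0 s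
  calc uniformOrderStat m (j + 1) (Iic s)
    _ = ∫⁻ u in Ioc 0 s, ENNReal.ofReal (betaDens m (j + 1) u) := by
        rw [uniformOrderStat, withDensity_apply _ measurableSet_Iic,
          Measure.restrict_congr_set Ioo_ae_eq_Ioc, Measure.restrict_restrict measurableSet_Iic,
          inter_comm, Ioc_inter_Iic, min_eq_right hs.2]
    _ = ENNReal.ofReal (∫ u in (0 : ℝ)..s, betaDens m (j + 1) u) := by
        rw [intervalIntegral.integral_of_le hs.1, ofReal_integral_eq_lintegral_ofReal
          ((intervalIntegrable_iff_integrableOn_Ioc_of_le hs.1).1 hint) hnonneg]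
    _ = ENNReal.ofReal ((bernsteinTail ℝ m j).eval s) := by
        rw [intervalIntegral.integral_eq_sub_of_hasDerivAt
          (fun u _ ↦ hasDerivAt_eval_bernsteinTail hj u) hint, eval_bernsteinTail_zero, sub_zero]

theorem isProbabilityMeasure_uniformOrderStat {m j : ℕ} (hj : j < m) :
    IsProbabilityMeasure (uniformOrderStat m (j + 1)) := by
  have hIic : uniformOrderStat m (j + 1) (Iic 1) = uniformOrderStat m (j + 1) univ :=
    measure_congr <| eventuallyEq_univ.2 <|
      (ae_mem_Ioo_uniformOrderStat m (j + 1)).mono fun _ hu ↦ hu.2.le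
  exact ⟨by rw [← hIic, uniformOrderStat_Iic hj unitInterval.one_mem, eval_bernsteinTail_one hj,
    ENNReal.ofReal_one]⟩

theorem uniformOrderStat_Ioi {m j : ℕ} (hj : j < m) {s : ℝ} (hs : s ∈ I) :
    uniformOrderStat m (j + 1) (Ioi s) = ENNReal.ofReal (1 - (bernsteinTail ℝ m j).eval s) := by
  have := isProbabilityMeasure_uniformOrderStat hj
  rw [← compl_Iic, prob_compl_eq_one_sub measurableSet_Iic, uniformOrderStat_Iic hj hs,
    ENNReal.ofReal_sub _ (eval_bernsteinTail_nonneg m j hs), ENNReal.ofReal_one]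

theorem IsCDF.integral_map_quantile_uniformOrderStat {F : ℝ → ℝ} (hF : IsCDF F) (m j : ℕ) :
    ∫ b, b ∂(uniformOrderStat m j).map (quantile F) = muOS m j F := by
  rw [integral_map (f := fun b ↦ b)
      (hF.aemeasurable_quantile (ae_mem_Ioo_uniformOrderStat m j)) aestronglyMeasurable_id,
    uniformOrderStat,
    integral_withDensity_eq_integral_toReal_smul
      (continuous_betaDens m j).measurable.ennreal_ofReal (by simp), muOS]
  refine setIntegral_congr_fun measurableSet_Ioo fun u hu ↦ ?_
  simp only [ENNReal.toReal_ofReal (betaDens_nonneg m j (Ioo_subset_Icc_self hu)), smul_eq_mul,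
    mul_comm]

end OrderStatistics

section Cells

open scoped unitInterval

/-- Lebesgue measure on the cell `(j / m, (j + 1) / m]` of the regular partition of `(0, 1]` into
`m` intervals. -/
def cellMeasure (m j : ℕ) : Measure ℝ :=
  volume.restrict (Ioc ((j : ℝ) / m) (((j : ℝ) + 1) / m))

instance (m j : ℕ) : IsFiniteMeasure (cellMeasure m j) := by
  unfold cellMeasure
  infer_instance

theorem ae_mem_Ioo_cellMeasure {m j : ℕ} (hj : j < m) :
    ∀ᵐ u ∂cellMeasure m j, u ∈ Ioo (0 : ℝ) 1 := by
  have hm : (0 : ℝ) < m := Nat.cast_pos.2 (Nat.zero_lt_of_lt hj)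
  have hj' : ((j : ℝ) + 1) / m ≤ 1 := by
    rw [div_le_one hm]
    exact_mod_cast hj
  rw [cellMeasure, ← Measure.restrict_congr_set Ioo_ae_eq_Ioc]
  filter_upwards [ae_restrict_mem measurableSet_Ioo] with u hu
  exact ⟨(by positivity : (0 : ℝ) ≤ j / m).trans_lt hu.1, hu.2.trans_le hj'⟩

theorem cellMeasure_Iic (m j : ℕ) (s : ℝ) :
    cellMeasure m j (Iic s) =
      ENNReal.ofReal (min (((j : ℝ) + 1) / m) s - min ((j : ℝ) / m) s) :=
  volume_restrict_Ioc_Iic (by gcongr; linarith) s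

theorem cellMeasure_Ioi (m j : ℕ) (s : ℝ) :
    cellMeasure m j (Ioi s) =
      ENNReal.ofReal (max (((j : ℝ) + 1) / m) s - max ((j : ℝ) / m) s) :=
  volume_restrict_Ioc_Ioi (by gcongr; linarith) s

theorem cellMeasure_real_univ (m j : ℕ) : (cellMeasure m j).real univ = (m : ℝ)⁻¹ := by
  rw [cellMeasure, measureReal_restrict_apply_univ,
    Real.volume_real_Ioc_of_le (by gcongr; linarith)]
  ring

theorem sum_cellMeasure_real_Iic {m : ℕ} (hm : m ≠ 0) {s : ℝ} (hs : s ∈ I) :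
    ∑ j ∈ Finset.range m, (cellMeasure m j).real (Iic s) = s := by
  have hcell (j : ℕ) : (cellMeasure m j).real (Iic s) =
      min (((j + 1 : ℕ) : ℝ) / m) s - min ((j : ℝ) / m) s := by
    have hle : min ((j : ℝ) / m) s ≤ min (((j : ℝ) + 1) / m) s := by gcongr; linarith
    rw [measureReal_def, cellMeasure_Iic, ENNReal.toReal_ofReal (sub_nonneg.2 hle)]
    push_cast
    rfl
  simp_rw [hcell]
  rw [Finset.sum_range_sub (fun j ↦ min ((j : ℝ) / m) s)]
  simp [hm, hs.1, hs.2]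

end Cells

section Rate

open scoped unitInterval

variable {F : ℝ → ℝ} {m : ℕ}

theorem hoeffCDF_sub_eq_sum (hF : IsCDF F) (hm : m ≠ 0) (x : ℝ) :
    hoeffCDF m F x - F x = ∑ j ∈ Finset.range m,
      ((cellMeasure m j).real univ * (if muOS m (j + 1) F ≤ x then 1 else 0) -
        (cellMeasure m j).real (Iic (F x))) := by
  rw [Finset.sum_sub_distrib, sum_cellMeasure_real_Iic hm (hF.mem_unitInterval x), hoeffCDF,
    Finset.mul_sum, ← Finset.Ico_add_one_right_eq_Icc, Finset.range_eq_Ico,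
    ← Finset.sum_Ico_add' _ 0 m 1]
  simp_rw [cellMeasure_real_univ]

theorem sum_cellMeasure_mul_uniformOrderStat_le (hm : m ≠ 0) {s : ℝ} (hs : s ∈ I) :
    ∑ j ∈ Finset.range m, (cellMeasure m j (Iic s) * uniformOrderStat m (j + 1) (Ioi s) +
        cellMeasure m j (Ioi s) * uniformOrderStat m (j + 1) (Iic s)) ≤
      ENNReal.ofReal √(s * (1 - s) / m) := by
  have hmin (j : ℕ) : 0 ≤ min (((j : ℝ) + 1) / m) s - min ((j : ℝ) / m) s :=
    sub_nonneg.2 (by gcongr; linarith)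
  have hmax (j : ℕ) : 0 ≤ max (((j : ℝ) + 1) / m) s - max ((j : ℝ) / m) s :=
    sub_nonneg.2 (by gcongr; linarith)
  have hhead {j : ℕ} (hj : j < m) : 0 ≤ 1 - (bernsteinTail ℝ m j).eval s :=
    sub_nonneg.2 (eval_bernsteinTail_le_one hj.le hs)
  have htail (j : ℕ) := eval_bernsteinTail_nonneg m j hs
  refine le_of_eq_of_le ?_
    (ENNReal.ofReal_le_ofReal (sum_min_sub_mul_add_max_sub_mul_bernsteinTail_le hm hs))
  rw [ENNReal.ofReal_sum_of_nonneg fun j hj ↦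
    add_nonneg (mul_nonneg (hmin j) (hhead (Finset.mem_range.1 hj)))
      (mul_nonneg (hmax j) (htail j))]
  refine Finset.sum_congr rfl fun j hj ↦ ?_
  replace hj := Finset.mem_range.1 hj
  rw [cellMeasure_Iic, cellMeasure_Ioi, uniformOrderStat_Iic hj hs, uniformOrderStat_Ioi hj hs,
    ENNReal.ofReal_add (mul_nonneg (hmin j) (hhead hj)) (mul_nonneg (hmax j) (htail j)),
    ENNReal.ofReal_mul (hmin j), ENNReal.ofReal_mul (hmax j)]

theorem lintegral_enorm_hoeffCDF_sub_le (hF : IsCDF F) (hm : m ≠ 0) :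
    ∫⁻ x, ‖hoeffCDF m F x - F x‖ₑ ≤ ∫⁻ x, ENNReal.ofReal √(F x * (1 - F x) / m) := by
  let μ (j : ℕ) : Measure ℝ := (cellMeasure m j).map (quantile F)
  let ν (j : ℕ) : Measure ℝ := (uniformOrderStat m (j + 1)).map (quantile F)
  have hae {j : ℕ} (hj : j ∈ Finset.range m) := ae_mem_Ioo_cellMeasure (Finset.mem_range.1 hj)
  have hae' (j : ℕ) := ae_mem_Ioo_uniformOrderStat m (j + 1)
  have hν : ∀ j ∈ Finset.range m, IsProbabilityMeasure (ν j) := fun j hj ↦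
    have := isProbabilityMeasure_uniformOrderStat (Finset.mem_range.1 hj)
    Measure.isProbabilityMeasure_map (hF.aemeasurable_quantile (hae' j))
  calc ∫⁻ x, ‖hoeffCDF m F x - F x‖ₑ
    _ = ∫⁻ x, ‖∑ j ∈ Finset.range m, ((μ j).real univ * (if ∫ b, b ∂ν j ≤ x then 1 else 0) -
          (μ j).real (Iic x))‖ₑ := by
        refine lintegral_congr fun x ↦ ?_
        rw [hoeffCDF_sub_eq_sum hF hm]
        congr 1
        refine Finset.sum_congr rfl fun j hj ↦ ?_
        rw [hF.integral_map_quantile_uniformOrderStat, measureReal_def, measureReal_def,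
          measureReal_def, measureReal_def, hF.map_quantile_Iic (hae hj),
          Measure.map_apply_of_aemeasurable (hF.aemeasurable_quantile (hae hj)) .univ,
          preimage_univ]
    _ ≤ ∫⁻ x, ∑ j ∈ Finset.range m, (μ j (Iic x) * ν j (Ioi x) + μ j (Ioi x) * ν j (Iic x)) :=
        lintegral_enorm_sum_step_integral_sub_le _ μ ν hν
    _ ≤ ∫⁻ x, ENNReal.ofReal √(F x * (1 - F x) / m) := by
        refine lintegral_mono fun x ↦ le_of_eq_of_le (Finset.sum_congr rfl fun j hj ↦ ?_)
          (sum_cellMeasure_mul_uniformOrderStat_le hm (hF.mem_unitInterval x))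
        rw [hF.map_quantile_Iic (hae hj), hF.map_quantile_Ioi (hae hj),
          hF.map_quantile_Iic (hae' j), hF.map_quantile_Ioi (hae' j)]

theorem hoeffCDF_L1_rate_general (hF : IsCDF F)
    (hC : Integrable fun x ↦ √(F x * (1 - F x))) :
    ∀ m : ℕ, 0 < m →
      (∫ x, |hoeffCDF m F x - F x|) ≤ (∫ x, √(F x * (1 - F x))) * (m : ℝ) ^ (-(1 : ℝ) / 2) := by
  intro m hm
  have hsqrt (x : ℝ) :
      √(F x * (1 - F x) / m) = √(F x * (1 - F x)) * (m : ℝ) ^ (-(1 : ℝ) / 2) := by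
    rw [Real.sqrt_div' _ m.cast_nonneg, div_eq_mul_inv, neg_div, Real.rpow_neg m.cast_nonneg,
      ← Real.sqrt_eq_rpow]
  have hint : Integrable fun x ↦ √(F x * (1 - F x) / m) := by
    simpa only [hsqrt] using hC.mul_const _
  calc ∫ x, |hoeffCDF m F x - F x|
    _ ≤ (∫⁻ x, ‖hoeffCDF m F x - F x‖ₑ).toReal := by
        refine (le_abs_self _).trans ?_
        simpa only [Real.norm_eq_abs, abs_abs, Real.enorm_eq_ofReal_abs] using
          norm_integral_le_lintegral_norm (μ := volume) fun x ↦ |hoeffCDF m F x - F x|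
    _ ≤ (∫⁻ x, ENNReal.ofReal √(F x * (1 - F x) / m)).toReal :=
        ENNReal.toReal_mono hint.lintegral_lt_top.ne
          (lintegral_enorm_hoeffCDF_sub_le hF hm.ne')
    _ = ∫ x, √(F x * (1 - F x) / m) :=
        (integral_eq_lintegral_of_nonneg_ae (ae_of_all _ fun x ↦ Real.sqrt_nonneg _)
          hint.aestronglyMeasurable).symm
    _ = (∫ x, √(F x * (1 - F x))) * (m : ℝ) ^ (-(1 : ℝ) / 2) := by
        simp_rw [hsqrt, integral_mul_const]

end Rate

/-- Rate of convergence of `F_m` to `F` in `L¹`: if the quantile function `Q` of `F`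
is locally absolutely continuous on (0,1) with a.e. derivative `q ≥ 0` satisfying
`C = ∫₀¹ √(u(1−u)) q(u) du < ∞`, then `‖F_m − F‖₁ ≤ C · m^{−1/2}`. -/
theorem hoeffCDF_L1_rate
    (F : ℝ → ℝ) (hF : IsCDF F) (q : ℝ → ℝ)
    (hq_nonneg : ∀ u ∈ Ioo (0:ℝ) 1, 0 ≤ q u)
    (hq_int : ∀ a b : ℝ, 0 < a → a ≤ b → b < 1 → IntegrableOn q (Icc a b))
    (hQ : ∀ a b : ℝ, 0 < a → a ≤ b → b < 1 →
      quantile F b - quantile F a = ∫ u in a..b, q u)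
    (hC : IntegrableOn (fun u => Real.sqrt (u * (1 - u)) * q u) (Ioo (0:ℝ) 1)) :
    ∀ m : ℕ, 0 < m →
      (∫ x : ℝ, |hoeffCDF m F x - F x|)
        ≤ (∫ u in Ioo (0:ℝ) 1, Real.sqrt (u * (1 - u)) * q u) * ((m : ℝ) ^ (-(1:ℝ)/2)) := by
  have hq : IsQuantileDensity F q := ⟨hq_nonneg, hq_int, hQ⟩
  rw [← hq.integral_sqrt_mul_one_sub hF]
  exact hoeffCDF_L1_rate_general hF ((hq.integrable_sqrt_mul_one_sub_iff hF).2 hC)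
end
end

section
/- Let m be a positive integer, let a₁ < a₂ < … < a_m be real numbers with minimal gap δ = min_{1≤j≤m−1} (a_{j+1} − a_j), and let b₁, …, b_m be real numbers with max_{1≤j≤m} |a_j − b_j| < δ/2. Define the step CDFs A(x) = (1/m) ∑_{j=1}^m 1{a_j ≤ x} and B(x) = (1/m) ∑_{j=1}^m 1{b_j ≤ x}. Then for every p ∈ [1, ∞), ∫_ℝ |A(x) − B(x)|^p dx = m^{−p} ∑_{j=1}^m |a_j − b_j|. -/
open MeasureTheory Filter Set
open scoped BoundedContinuousFunction ProbabilityTheory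

noncomputable section

/-!
The difference of the two CDFs is `1/m` times the sum of the signed indicators
`1{a_j ≤ x} - 1{b_j ≤ x}`, and the `j`-th of these has absolute value `1` on the interval between
`a_j` and `b_j` and vanishes elsewhere. The gap condition makes these intervals disjoint, so at each
`x` at most one term of the sum is nonzero, and `|·| ^ p` may be taken termwise.
-/

open scoped symmDiff

theorem apply_sum_of_pairwise_eq_zero_or {ι M N : Type*} [AddCommMonoid M] [AddCommMonoid N]
    {φ : M → N} (hφ : φ 0 = 0) {s : Finset ι} {f : ι → M}
    (hf : (s : Set ι).Pairwise fun i j => f i = 0 ∨ f j = 0) :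
    φ (∑ i ∈ s, f i) = ∑ i ∈ s, φ (f i) := by
  by_cases hz : ∀ i ∈ s, f i = 0
  · rw [Finset.sum_eq_zero hz, hφ, Finset.sum_eq_zero fun i hi => by rw [hz i hi, hφ]]
  · push Not at hz
    obtain ⟨i, hi, hfi⟩ := hz
    have hothers : ∀ j ∈ s, j ≠ i → f j = 0 := fun j hj hji =>
      (hf hi hj hji.symm).resolve_left hfi
    rw [Finset.sum_eq_single_of_mem i hi hothers,
      Finset.sum_eq_single_of_mem i hi fun j hj hji => by rw [hothers j hj hji, hφ]]

theorem Ici_symmDiff_Ici {α : Type*} [LinearOrder α] (a b : α) :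
    Ici a ∆ Ici b = Ico (min a b) (max a b) := by
  rw [symmDiff_def, Ici_sdiff_Ici, Ici_sdiff_Ici]
  rcases le_total a b with hab | hba
  · simp [hab]
  · simp [hba]

theorem volume_real_Ico_min_max (a b : ℝ) :
    volume.real (Ico (min a b) (max a b)) = |a - b| := by
  rw [Real.volume_real_Ico_of_le min_le_max, max_sub_min_eq_abs']

section SymmDiff

variable {α ι : Type*} {s : Finset ι} {S T : ι → Set α} {p : ℝ}

theorem abs_indicator_one_sub_rpow (hp : p ≠ 0) (A B : Set α) (x : α) :
    |A.indicator (1 : α → ℝ) x - B.indicator 1 x| ^ p = (A ∆ B).indicator 1 x := by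
  rw [← apply_indicator_symmDiff abs_neg]
  by_cases hx : x ∈ A ∆ B
  · simp only [indicator_of_mem hx, Pi.one_apply, abs_one, Real.one_rpow]
  · simp only [indicator_of_notMem hx, abs_zero, Real.zero_rpow hp]

theorem indicator_sub_indicator_eq_zero_of_notMem_symmDiff {M : Type*} [AddGroup M] {A B : Set α}
    {x : α} (hx : x ∉ A ∆ B) (f : α → M) : A.indicator f x - B.indicator f x = 0 := by
  classical
  have hAB : x ∈ A ↔ x ∈ B := by
    simpa only [mem_symmDiff, not_or, not_and_not_right, iff_def] using hx
  simp only [indicator_apply, hAB, sub_self]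

theorem abs_sum_indicator_one_sub_rpow (hp : p ≠ 0)
    (hST : (s : Set ι).PairwiseDisjoint fun i => S i ∆ T i) (x : α) :
    |∑ i ∈ s, ((S i).indicator (1 : α → ℝ) x - (T i).indicator 1 x)| ^ p =
      ∑ i ∈ s, (S i ∆ T i).indicator 1 x := by
  have hzero : (s : Set ι).Pairwise fun i j =>
      (S i).indicator (1 : α → ℝ) x - (T i).indicator 1 x = 0 ∨
        (S j).indicator (1 : α → ℝ) x - (T j).indicator 1 x = 0 := by
    intro i hi j hj hij
    by_cases hx : x ∈ S i ∆ T i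
    · exact .inr <| indicator_sub_indicator_eq_zero_of_notMem_symmDiff
        (disjoint_left.1 (hST hi hj hij) hx) 1
    · exact .inl <| indicator_sub_indicator_eq_zero_of_notMem_symmDiff hx 1
  rw [apply_sum_of_pairwise_eq_zero_or (φ := fun y : ℝ => |y| ^ p)
    (by rw [abs_zero, Real.zero_rpow hp]) hzero]
  exact Finset.sum_congr rfl fun i _ => abs_indicator_one_sub_rpow hp (S i) (T i) x

theorem integral_abs_sum_indicator_one_sub_rpow [MeasurableSpace α] {μ : Measure α} (hp : p ≠ 0)
    (hmeas : ∀ i ∈ s, MeasurableSet (S i ∆ T i)) (hfin : ∀ i ∈ s, μ (S i ∆ T i) ≠ ⊤)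
    (hST : (s : Set ι).PairwiseDisjoint fun i => S i ∆ T i) :
    ∫ x, |∑ i ∈ s, ((S i).indicator (1 : α → ℝ) x - (T i).indicator 1 x)| ^ p ∂μ =
      ∑ i ∈ s, μ.real (S i ∆ T i) := by
  have hintegrable : ∀ i ∈ s, Integrable ((S i ∆ T i).indicator (1 : α → ℝ)) μ := fun i hi =>
    (integrable_indicator_iff (hmeas i hi)).2 (integrableOn_const (hfin i hi))
  simp_rw [abs_sum_indicator_one_sub_rpow hp hST]
  rw [integral_finsetSum s hintegrable]
  exact Finset.sum_congr rfl fun i hi => integral_indicator_one (hmeas i hi)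

end SymmDiff

theorem ecdf_eq_inv_mul_sum_indicator_Ici (n : ℕ) (c : ℕ → ℝ) (x : ℝ) :
    ecdf n c x = (n : ℝ)⁻¹ * ∑ i ∈ Finset.range n, (Ici (c i)).indicator 1 x := by
  simp only [ecdf, indicator_apply, mem_Ici, Pi.one_apply]

theorem abs_ecdf_sub_rpow (n : ℕ) (a b : ℕ → ℝ) (x p : ℝ) :
    |ecdf n a x - ecdf n b x| ^ p = ((n : ℝ) ^ p)⁻¹ *
      |∑ i ∈ Finset.range n,
        ((Ici (a i)).indicator (1 : ℝ → ℝ) x - (Ici (b i)).indicator 1 x)| ^ p := by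
  have hn : (0 : ℝ) ≤ n := n.cast_nonneg
  rw [ecdf_eq_inv_mul_sum_indicator_Ici, ecdf_eq_inv_mul_sum_indicator_Ici, ← mul_sub,
    ← Finset.sum_sub_distrib, abs_mul, Real.mul_rpow (abs_nonneg _) (abs_nonneg _),
    abs_of_nonneg (inv_nonneg.2 hn), Real.inv_rpow hn]

theorem max_lt_min_of_abs_sub_lt {K : Type*} [Field K] [LinearOrder K] [IsStrictOrderedRing K]
    {x x' y y' : K}
    (hx : |x - x'| < (y - x) / 2) (hy : |y - y'| < (y - x) / 2) : max x x' < min y y' := by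
  have hxy : x < y := by linarith [abs_nonneg (x - x')]
  rw [abs_lt] at hx hy
  rw [max_lt_iff, lt_min_iff, lt_min_iff]
  refine ⟨⟨?_, ?_⟩, ?_, ?_⟩ <;> linarith

theorem pairwiseDisjoint_Ico_min_max_of_abs_sub_lt {m : ℕ} {a b : ℕ → ℝ}
    (hclose : ∀ j < m, ∀ i, i + 1 < m → |a j - b j| < (a (i + 1) - a i) / 2) :
    (Finset.range m : Set ℕ).PairwiseDisjoint fun j => Ico (min (a j) (b j)) (max (a j) (b j)) := by
  have hmono : MonotoneOn a (Iio m) :=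
    monotoneOn_of_le_add_one ordConnected_Iio fun i _ hi hi' => by
      linarith [abs_nonneg (a i - b i), hclose i hi i hi']
  have hsep : ∀ i j, i < j → j < m → max (a i) (b i) < min (a j) (b j) := by
    intro i j hij hj
    have hi : i + 1 < m := by lia
    have hgap : a (i + 1) ≤ a j := hmono hi hj hij
    exact max_lt_min_of_abs_sub_lt
      ((hclose i (hij.trans hj) i hi).trans_le (by gcongr))
      ((hclose j hj i hi).trans_le (by gcongr))
  have hdisj : ∀ i j, i < j → j < m → Disjoint (Ico (min (a i) (b i)) (max (a i) (b i)))
      (Ico (min (a j) (b j)) (max (a j) (b j))) := fun i j hij hj =>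
    Ico_disjoint_Ico.2 <|
      (min_le_left _ _).trans <| (hsep i j hij hj).le.trans (le_max_right _ _)
  intro i hi j hj hij
  rw [Finset.mem_coe, Finset.mem_range] at hi hj
  rcases hij.lt_or_gt with hlt | hgt
  · exact hdisj i j hlt hj
  · exact (hdisj j i hgt hi).symm

theorem step_cdf_Lp_distance_general (m : ℕ) (a b : ℕ → ℝ)
    (hab : (Finset.range m : Set ℕ).PairwiseDisjoint fun j =>
      Ico (min (a j) (b j)) (max (a j) (b j)))
    (p : ℝ) (hp : 0 < p) :
    (∫ x : ℝ, |ecdf m a x - ecdf m b x| ^ p)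
      = ((m : ℝ) ^ p)⁻¹ * ∑ j ∈ Finset.range m, |a j - b j| := by
  simp_rw [← Ici_symmDiff_Ici] at hab
  simp_rw [abs_ecdf_sub_rpow]
  rw [integral_const_mul, integral_abs_sum_indicator_one_sub_rpow hp.ne'
    (fun j _ => measurableSet_Ici.symmDiff measurableSet_Ici)
    (fun j _ => by simp [Ici_symmDiff_Ici]) hab]
  simp_rw [Ici_symmDiff_Ici, volume_real_Ico_min_max]

/-- If two step CDFs assign mass `1/m` to points `a_j` (strictly increasing) and
`b_j`, where each `|a_j − b_j|` is less than half the minimal gap of the `a_j`, then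
`∫ |A − B|^p = m^{−p} ∑_j |a_j − b_j|` for every `p ∈ [1, ∞)`. -/
theorem step_cdf_Lp_distance
    (m : ℕ) (hm : 0 < m) (a b : ℕ → ℝ)
    (ha : ∀ i : ℕ, i + 1 < m → a i < a (i + 1))
    (hclose : ∀ j < m, ∀ i : ℕ, i + 1 < m → |a j - b j| < (a (i + 1) - a i) / 2)
    (p : ℝ) (hp : 1 ≤ p) :
    (∫ x : ℝ, |ecdf m a x - ecdf m b x| ^ p)
      = ((m : ℝ) ^ p)⁻¹ * ∑ j ∈ Finset.range m, |a j - b j| :=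
  step_cdf_Lp_distance_general m a b (pairwiseDisjoint_Ico_min_max_of_abs_sub_lt hclose) p
    (one_pos.trans_le hp)
end
end
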